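/- There exists a (7, 2517, K)-snake, i.e., a cyclic sequence of 2517 distinct permutations of S_7, each obtained from the previous by a push-to-the-top operation on an odd index, with all permutations even; 2517 = 7!/2 - 3. -/

import Mathlib

/-!
The snake is the orbit of the identity under `π ↦ pushToTop (snakeIndex π) π`, where `snakeIndex`
reads off from the one-line notation of `π` which of `t₃`, `t₅`, `t₇` to apply. The rule is
unchanged when the values `0, 1, 2` are permuted cyclically, so the step commutes with left
multiplication by the 3-cycle `ρ = (0 1 2)`. After `839` steps the orbit reaches `ρ` itself, hence
it closes up after `839 * 3 = 2517` steps. As `839` and `3` are prime, a shorter period would divide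
one of them, and neither is a period. All the moves are even permutations, and two distinct
permutations of equal sign are never a single adjacent transposition apart. The three even
permutations left out form the `t₃`-cycle of `[0, 1, 2, 6, 3, 5, 4]`.
-/

def adjTranspositions (n : ℕ) : Set (Equiv.Perm (Fin n)) :=
  {s | ∃ i j : Fin n, (j : ℕ) = (i : ℕ) + 1 ∧ s = Equiv.swap i j}

/-- Kendall's τ-distance on `S_n`. -/
noncomputable def kendall {n : ℕ} (σ π : Equiv.Perm (Fin n)) : ℕ :=
  sInf {k | ∃ l : List (Equiv.Perm (Fin n)), l.length = k ∧
    (∀ s ∈ l, s ∈ adjTranspositions n) ∧ σ * l.prod = π}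

/-- Push-to-the-top operation `t_{i+1}` (1-indexed). -/
def pushToTop {n : ℕ} (i : Fin n) (π : Equiv.Perm (Fin n)) : Equiv.Perm (Fin n) :=
  π * (Fin.cycleRange i)⁻¹

section Kendall

variable {n : ℕ}

theorem exists_adjTranspositions_list_prod_eq (σ : Equiv.Perm (Fin n)) :
    ∃ l : List (Equiv.Perm (Fin n)), (∀ s ∈ l, s ∈ adjTranspositions n) ∧ l.prod = σ := by
  cases n with
  | zero => exact ⟨[], by simp, Subsingleton.elim _ _⟩
  | succ n =>
    have hσ : σ ∈ Submonoid.closure (Set.range fun i : Fin n => Equiv.swap i.castSucc i.succ) := by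
      rw [Equiv.Perm.mclosure_swap_castSucc_succ]
      exact Submonoid.mem_top σ
    obtain ⟨l, hl, hprod⟩ := Submonoid.exists_list_of_mem_closure hσ
    refine ⟨l, fun s hs => ?_, hprod⟩
    obtain ⟨i, rfl⟩ := hl s hs
    exact ⟨i.castSucc, i.succ, by simp, rfl⟩

theorem sign_of_mem_adjTranspositions {s : Equiv.Perm (Fin n)} (hs : s ∈ adjTranspositions n) :
    Equiv.Perm.sign s = -1 := by
  obtain ⟨i, j, hij, rfl⟩ := hs
  exact Equiv.Perm.sign_swap (by rintro rfl; omega)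

theorem two_le_kendall_of_sign_eq {σ π : Equiv.Perm (Fin n)} (hne : σ ≠ π)
    (hsign : Equiv.Perm.sign σ = Equiv.Perm.sign π) : 2 ≤ kendall σ π := by
  -- `sInf ∅ = 0`, so the bound needs some path from `σ` to `π`.
  refine le_csInf ?_ ?_
  · obtain ⟨l, hl, hprod⟩ := exists_adjTranspositions_list_prod_eq (σ⁻¹ * π)
    exact ⟨l.length, l, rfl, hl, by rw [hprod, mul_inv_cancel_left]⟩
  · rintro _ ⟨l, rfl, hl, hprod⟩
    match l with
    | [] => exact absurd (by simpa using hprod) hne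
    | [s] =>
      have hs : Equiv.Perm.sign s = -1 := sign_of_mem_adjTranspositions (hl s (by simp))
      simp [← hprod, hs] at hsign
    | _ :: _ :: _ => simp

end Kendall

section PushToTop

variable {n : ℕ}

theorem sign_pushToTop {i : Fin n} (hi : Even (i : ℕ)) (π : Equiv.Perm (Fin n)) :
    Equiv.Perm.sign (pushToTop i π) = Equiv.Perm.sign π := by
  simp [pushToTop, Fin.sign_cycleRange, hi.neg_one_pow]

theorem pushToTop_mul (i : Fin n) (σ π : Equiv.Perm (Fin n)) :
    pushToTop i (σ * π) = σ * pushToTop i π :=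
  mul_assoc _ _ _

end PushToTop

section PeriodicPoints

open Function

variable {α : Type*} {f g : α → α} {x : α} {n : ℕ}

theorem iterate_mul_apply_of_commute (hfg : Function.Commute f g) (hx : f^[n] x = g x) (k : ℕ) :
    f^[n * k] x = g^[k] x := by
  induction k with
  | zero => rfl
  | succ k ih =>
    rw [Nat.mul_succ, iterate_add_apply, hx, (hfg.iterate_left _).eq, ih, iterate_succ_apply']

theorem minimalPeriod_eq_of_forall_prime (hn : IsPeriodicPt f n x)
    (hprime : ∀ p : ℕ, p.Prime → p ∣ n → ¬ IsPeriodicPt f (n / p) x) :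
    minimalPeriod f x = n := by
  obtain ⟨a, ha⟩ := hn.minimalPeriod_dvd
  suffices a = 1 by rw [ha, this, mul_one]
  by_contra ha_ne
  have hp : a.minFac.Prime := Nat.minFac_prime ha_ne
  obtain ⟨b, hb⟩ := a.minFac_dvd
  have hnb : n = a.minFac * (minimalPeriod f x * b) := by
    rw [mul_left_comm, ← hb, ← ha]
  refine hprime _ hp ⟨_, hnb⟩ ?_
  rw [Nat.div_eq_of_eq_mul_right hp.pos hnb]
  exact (isPeriodicPt_minimalPeriod f x).mul_const b

theorem injective_iterate_fin_minimalPeriod (f : α → α) (x : α) :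
    Injective fun k : Fin (minimalPeriod f x) => f^[k] x :=
  fun k l hkl => Fin.ext (iterate_injOn_Iio_minimalPeriod k.isLt l.isLt hkl)

theorem iterate_fin_add_one [NeZero n] (hn : IsPeriodicPt f n x) (k : Fin n) :
    f^[(k + 1 : Fin n)] x = f (f^[k] x) := by
  rw [Fin.val_add, Fin.val_one', Nat.add_mod_mod, hn.iterate_mod_apply, iterate_succ_apply']

end PeriodicPoints

/-- The position, counted from `0`, of the letter that the snake pushes to the top of the
permutation with one-line notation `w`. The rule was found by computer search among those invariant
under `0 ↦ 1 ↦ 2 ↦ 0` on values. -/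
def snakeIndex (w : Fin 7 → Fin 7) : Fin 7 :=
  if w 1 = Fin.cycleRange 2 (w 0) ∧ w 5 = 5 ∧ w 6 = 4 then 2
  else if w 0 < 3 ∧ (w 1 < 4 ∨ w 2 < 5) then 4
  else 6

/-- The successor map of the snake. -/
def snakeStep (π : Equiv.Perm (Fin 7)) : Equiv.Perm (Fin 7) :=
  pushToTop (snakeIndex π) π

/-- The one-line notation of the permutation reached from `[a, b, c, d, e, f, g]` by `k` snake
steps. The letters are separate arguments and the recursion branches on the index so that
evaluation finishes each step before the next one starts. -/
def iterateWord : ℕ → (a b c d e f g : Fin 7) → Fin 7 → Fin 7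
  | 0, a, b, c, d, e, f, g => ![a, b, c, d, e, f, g]
  | k + 1, a, b, c, d, e, f, g =>
    if snakeIndex ![a, b, c, d, e, f, g] = 2 then iterateWord k c a b d e f g
    else if snakeIndex ![a, b, c, d, e, f, g] = 4 then iterateWord k e a b c d f g
    else iterateWord k g a b c d e f

theorem snakeIndex_eq_two_or_four_or_six (w : Fin 7 → Fin 7) :
    snakeIndex w = 2 ∨ snakeIndex w = 4 ∨ snakeIndex w = 6 := by
  unfold snakeIndex
  split_ifs <;> decide

theorem even_snakeIndex (w : Fin 7 → Fin 7) : Even (snakeIndex w : ℕ) := by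
  rcases snakeIndex_eq_two_or_four_or_six w with h | h | h <;> rw [h] <;> decide

theorem snakeIndex_cycleRange_comp (w : Fin 7 → Fin 7) :
    snakeIndex (Fin.cycleRange 2 ∘ w) = snakeIndex w := by
  have hlt : ∀ a : Fin 7, (Fin.cycleRange 2 a < 3 ↔ a < 3) ∧ (Fin.cycleRange 2 a < 4 ↔ a < 4) ∧
      (Fin.cycleRange 2 a < 5 ↔ a < 5) := by decide
  have heq : ∀ a : Fin 7, (Fin.cycleRange 2 a = 5 ↔ a = 5) ∧ (Fin.cycleRange 2 a = 4 ↔ a = 4) := by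
    decide
  simp only [snakeIndex, Function.comp_apply, EmbeddingLike.apply_eq_iff_eq, hlt, heq]

theorem sign_iterate_snakeStep (k : ℕ) : Equiv.Perm.sign (snakeStep^[k] 1) = 1 := by
  induction k with
  | zero => simp
  | succ k ih =>
    rw [Function.iterate_succ_apply', snakeStep, sign_pushToTop (even_snakeIndex _), ih]

theorem snakeStep_commute_cycleRange_mul :
    Function.Commute snakeStep (Fin.cycleRange 2 * ·) := fun π => by
  simp only [snakeStep, Equiv.Perm.coe_mul, snakeIndex_cycleRange_comp, pushToTop_mul]

theorem coe_iterate_snakeStep (k : ℕ) (π : Equiv.Perm (Fin 7)) :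
    ⇑(snakeStep^[k] π) = iterateWord k (π 0) (π 1) (π 2) (π 3) (π 4) (π 5) (π 6) := by
  have hword (σ : Equiv.Perm (Fin 7)) : ![σ 0, σ 1, σ 2, σ 3, σ 4, σ 5, σ 6] = σ := by
    funext x; fin_cases x <;> rfl
  induction k generalizing π with
  | zero => exact (hword π).symm
  | succ k ih =>
    rw [Function.iterate_succ_apply, ih, iterateWord, hword, snakeStep]
    rcases snakeIndex_eq_two_or_four_or_six π with h | h | h <;> rw [h] <;> rfl

theorem iterate_snakeStep_839 : snakeStep^[839] 1 = Fin.cycleRange 2 := by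
  have hword : iterateWord 839 0 1 2 3 4 5 6 = ![1, 2, 0, 3, 4, 5, 6] := by decide +kernel
  refine DFunLike.coe_injective ((coe_iterate_snakeStep 839 1).trans (hword.trans ?_))
  decide

theorem isPeriodicPt_snakeStep : Function.IsPeriodicPt snakeStep (839 * 3) 1 := by
  have hcycle : snakeStep^[839] 1 = Fin.cycleRange 2 * 1 := by
    rw [iterate_snakeStep_839, mul_one]
  refine (iterate_mul_apply_of_commute snakeStep_commute_cycleRange_mul hcycle 3).trans ?_
  decide

theorem minimalPeriod_snakeStep : Function.minimalPeriod snakeStep 1 = 2517 := by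
  have h839 : Nat.Prime 839 := by norm_num
  refine minimalPeriod_eq_of_forall_prime isPeriodicPt_snakeStep fun p hp hdvd hper => ?_
  rcases hp.dvd_mul.mp (show p ∣ 839 * 3 from hdvd) with h | h
  · obtain rfl : p = 839 := (Nat.prime_dvd_prime_iff_eq hp h839).mp h
    have hthree : snakeStep^[3] 1 ≠ 1 := by decide +kernel
    exact hthree hper
  · obtain rfl : p = 3 := (Nat.prime_dvd_prime_iff_eq hp Nat.prime_three).mp h
    have hρ : Fin.cycleRange (2 : Fin 7) ≠ 1 := by decide
    exact hρ (iterate_snakeStep_839.symm.trans hper)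

/-- There exists a `(7,2517,K)`-snake: a cyclic sequence of `2517 = 7!/2 - 3` distinct even
permutations of `S_7`, consecutive ones (cyclically) differing by a push-to-the-top
operation on an odd index (even 0-indexed position), with pairwise Kendall's τ-distance at
least 2. -/
theorem stmt_19 :
    2517 = Nat.factorial 7 / 2 - 3 ∧
    ∃ c : Fin 2517 → Equiv.Perm (Fin 7),
      Function.Injective c ∧
      (∀ k : Fin 2517, ∃ i : Fin 7, Even (i : ℕ) ∧ c (k + 1) = pushToTop i (c k)) ∧
      (∀ k : Fin 2517, Equiv.Perm.sign (c k) = 1) ∧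
      (∀ k l : Fin 2517, k ≠ l → 2 ≤ kendall (c k) (c l)) := by
  have hper : Function.IsPeriodicPt snakeStep 2517 1 := isPeriodicPt_snakeStep
  have hinj : Function.Injective fun k : Fin 2517 => snakeStep^[k] 1 :=
    minimalPeriod_snakeStep ▸ injective_iterate_fin_minimalPeriod snakeStep 1
  refine ⟨by decide, fun k => snakeStep^[k] 1, hinj, fun k => ?_,
    fun k => sign_iterate_snakeStep k, fun k l hkl => ?_⟩
  · exact ⟨snakeIndex (snakeStep^[k] 1), even_snakeIndex _, iterate_fin_add_one hper k⟩
  · exact two_le_kendall_of_sign_eq (hinj.ne hkl)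
      ((sign_iterate_snakeStep k).trans (sign_iterate_snakeStep l).symm)
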